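/- If λ is a p-restricted partition, then the sum of the number of non-zero parts of λ and the number of non-zero parts of its Mullineux image m_p(λ) is not congruent to 1 modulo p. -/

import Mathlib

/-- `f` represents a partition: weakly decreasing with finitely many nonzero parts.
`f r` is the `(r+1)`-th part (0-indexed). -/
def IsPartition (f : ℕ → ℕ) : Prop :=
  (∀ m n : ℕ, m ≤ n → f n ≤ f m) ∧ ∃ N, ∀ n, N ≤ n → f n = 0

/-- `(r, c)` (0-indexed) is a node of the Young diagram of `f`. -/
def Cell (f : ℕ → ℕ) (r c : ℕ) : Prop := c < f r

/-- The ramp containing the 0-indexed node `(r, c)`; this equals `c-1+(p-1)(r-1)` in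
the paper's 1-indexed convention. -/
def rampOf (p : ℕ) (r c : ℕ) : ℤ := (c : ℤ) + ((p : ℤ) - 1) * (r : ℤ)

/-- The `p`-residue of the node `(r, c)`. -/
def res (p : ℕ) (r c : ℕ) : ZMod p := (c : ZMod p) - (r : ZMod p)

/-- `(r, c)` is a removable node of `f`. -/
def Removable (f : ℕ → ℕ) (r c : ℕ) : Prop := c + 1 = f r ∧ f (r + 1) < f r

/-- `(r, c)` is an addable node of `f`. -/
def Addable (f : ℕ → ℕ) (r c : ℕ) : Prop := c = f r ∧ (r = 0 ∨ f r < f (r - 1))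

/-- `rmp_l(λ)`: the number of nodes of `λ` in ramp `l`. -/
noncomputable def rmp (p : ℕ) (f : ℕ → ℕ) (l : ℤ) : ℕ :=
  Set.ncard {q : ℕ × ℕ | Cell f q.1 q.2 ∧ rampOf p q.1 q.2 = l}

/-- `f` is `p`-restricted: successive differences of parts are `< p`. -/
def PRestricted (p : ℕ) (f : ℕ → ℕ) : Prop := ∀ r, f r < f (r + 1) + p

/-- `g` is the `p`-restrictisation `f^rest` of `f`: the (unique) `p`-restricted
partition with the same number of nodes in each ramp as `f` (obtained by sliding
all nodes in each ramp as far towards the first row as possible). -/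
def IsRest (p : ℕ) (f g : ℕ → ℕ) : Prop :=
  IsPartition g ∧ PRestricted p g ∧ ∀ l : ℤ, rmp p g l = rmp p f l

/-- Row `r` of `f` contains a removable node of residue `i`. -/
def RemRes (p : ℕ) (f : ℕ → ℕ) (i : ZMod p) (r : ℕ) : Prop :=
  ∃ c, Removable f r c ∧ res p r c = i

/-- Row `r` of `f` contains an addable node of residue `i`. -/
def AddRes (p : ℕ) (f : ℕ → ℕ) (i : ZMod p) (r : ℕ) : Prop :=
  ∃ c, Addable f r c ∧ res p r c = i

/-- Row `r` of `f` contains a normal `i`-node: a removable `i`-node whose `−` sign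
survives the reduction of the `i`-signature (read top to bottom, `+` for addable
`i`-nodes and `−` for removable `i`-nodes, successively deleting adjacent pairs `−+`);
equivalently, for every lower row `s` carrying an addable `i`-node, the number of
addable `i`-nodes in rows `(r, s]` is at most the number of removable `i`-nodes in
rows `(r, s)`. -/
def NormalRow (p : ℕ) (f : ℕ → ℕ) (i : ZMod p) (r : ℕ) : Prop :=
  RemRes p f i r ∧ ∀ s, r < s → AddRes p f i s →
    Set.ncard {t : ℕ | r < t ∧ t ≤ s ∧ AddRes p f i t} ≤
      Set.ncard {t : ℕ | r < t ∧ t < s ∧ RemRes p f i t}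

/-- The number of normal `i`-nodes of `f`. -/
noncomputable def norCount (p : ℕ) (f : ℕ → ℕ) (i : ZMod p) : ℕ :=
  Set.ncard {r : ℕ | NormalRow p f i r}

/-- The number of removable `i`-nodes of `f`. -/
noncomputable def remCount (p : ℕ) (f : ℕ → ℕ) (i : ZMod p) : ℕ :=
  Set.ncard {r : ℕ | RemRes p f i r}

/-- `f` has a removable `i`-node together with an addable `i`-node in a strictly
later ramp. -/
def HasRemAddLater (p : ℕ) (f : ℕ → ℕ) (i : ZMod p) : Prop :=
  ∃ r c s d, Removable f r c ∧ res p r c = i ∧ Addable f s d ∧ res p s d = i ∧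
    rampOf p r c < rampOf p s d

open Classical in
/-- `f` with all its normal `i`-nodes removed (`f^{▾i}`). -/
noncomputable def remNorm (p : ℕ) (i : ZMod p) (f : ℕ → ℕ) : ℕ → ℕ :=
  fun r => f r - (if NormalRow p f i r then 1 else 0)

/-- The conjugate partition, as a parts function; `conjFn f 0` is the number of
non-zero parts of `f`. -/
noncomputable def conjFn (f : ℕ → ℕ) : ℕ → ℕ :=
  fun c => Set.ncard {r : ℕ | c < f r}

/-!
Read the rows of a `p`-restricted partition `f` from bottom to top and take a node from row `r`
unless `p` divides `f r + d`, where `d` nodes have been taken before. Finitely many such rounds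
peel `f` down to `∅` (Xu's algorithm). One round turns the removal of the normal `i`-nodes into
the removal of the normal `(i - 1)`-nodes. Hence, when normal nodes are removed from `f`, the
number of rounds behaves exactly as the number of parts of `M f` does under the relation
`M (remNorm p i f) = remNorm p (-i) (M f)`, and induction on `f` shows that the two numbers agree.

It remains to see that the number of parts `n + 1` and the number of rounds do not add up to `1`
modulo `p`. Follow `t - d` through the rounds `t`, where `d` nodes are taken from a fixed row `r`
and the rows below it: shifted by `-r`, it strictly increases and eventually gains one per round,
and so there is a last integer that it omits. Passing to the next row up moves this gap, but among
the `p - 1` integers just before it the sequence always takes a value congruent to `-(n + 1)`. At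
the first row the gap is the number of rounds minus one, which is therefore not congruent to
`-(n + 1)`.
-/

theorem forall_of_forall_ge_of_succ {P : ℕ → Prop} (N : ℕ) (hN : ∀ r, N ≤ r → P r)
    (h : ∀ r, P (r + 1) → P r) (r : ℕ) : P r := by
  rcases le_total N r with hr | hr
  · exact hN r hr
  · exact Nat.decreasingInduction (motive := fun k _ => P k) (fun k _ => h k) (hN N le_rfl) hr

section ScanUp

variable {σ : Type*} {step : ℕ → σ → σ} {tail : ℕ → σ} {N r : ℕ}

/-- The state reached when the rows `N - 1, N - 2, …, r` of a diagram are read upwards, starting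
from `tail N`. From row `N` on, the state is prescribed to be `tail`. -/
def scanUp (step : ℕ → σ → σ) (tail : ℕ → σ) (N r : ℕ) : σ :=
  if N ≤ r then tail r else step r (scanUp step tail N (r + 1))
termination_by N - r

theorem scanUp_of_le (h : N ≤ r) : scanUp step tail N r = tail r := by
  rw [scanUp, if_pos h]

theorem scanUp_eq_step (h : ∀ r, N ≤ r → tail r = step r (tail (r + 1))) (r : ℕ) :
    scanUp step tail N r = step r (scanUp step tail N (r + 1)) := by
  by_cases hr : N ≤ r
  · rw [scanUp_of_le hr, scanUp_of_le (hr.trans r.le_succ), h r hr]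
  · rw [scanUp, if_neg hr]

end ScanUp

section Partition

variable {f g : ℕ → ℕ}

theorem isPartition_of_le (hf : IsPartition f) (hgf : g ≤ f) (hg : ∀ r, g (r + 1) ≤ g r) :
    IsPartition g :=
  ⟨fun _ _ h => antitone_nat_of_succ_le hg h,
    hf.2.imp fun _ hN n hn => Nat.le_zero.mp ((hgf n).trans (hN n hn).le)⟩

theorem conjFn_eq_of_lt_iff {c a : ℕ} (h : ∀ r, c < f r ↔ r < a) : conjFn f c = a := by
  simp only [conjFn, h]
  exact Set.ncard_Iio_nat a

theorem conjFn_zero : conjFn 0 0 = 0 :=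
  conjFn_eq_of_lt_iff fun _ => by simp

namespace IsPartition

theorem succ_le (hf : IsPartition f) (r : ℕ) : f (r + 1) ≤ f r :=
  hf.1 r (r + 1) r.le_succ

theorem lt_apply_iff (hf : IsPartition f) {c r : ℕ} : c < f r ↔ r < conjFn f c := by
  classical
  obtain ⟨N, hN⟩ := hf.2
  have hex : ∃ r, f r ≤ c := ⟨N, (hN N le_rfl).le.trans c.zero_le⟩
  have hlt : ∀ r, c < f r ↔ r < Nat.find hex := fun r => by
    rw [Nat.lt_find_iff]
    exact ⟨fun h m hm => not_le.mpr (h.trans_le (hf.1 m r hm)), fun h => not_le.mp (h r le_rfl)⟩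
  rw [conjFn_eq_of_lt_iff hlt, hlt]

theorem apply_eq_zero_iff (hf : IsPartition f) {r : ℕ} : f r = 0 ↔ conjFn f 0 ≤ r := by
  rw [← not_lt, ← hf.lt_apply_iff, Nat.pos_iff_ne_zero, not_not]

theorem apply_eq_zero_of_le (hf : IsPartition f) {r s : ℕ} (hr : f r = 0) (h : r ≤ s) : f s = 0 :=
  hf.apply_eq_zero_iff.mpr ((hf.apply_eq_zero_iff.mp hr).trans h)

@[elab_as_elim]
theorem induction {P : ∀ f, IsPartition f → Prop}
    (step : ∀ f hf, (∀ g hg, g < f → P g hg) → P f hf) (f : ℕ → ℕ) (hf : IsPartition f) :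
    P f hf := by
  have finite (g : ℕ → ℕ) (hg : IsPartition g) : g.support.Finite :=
    (Set.finite_Iio (conjFn g 0)).subset fun r hr =>
      not_le.mp (mt hg.apply_eq_zero_iff.mpr hr)
  suffices ∀ (F : ℕ →₀ ℕ) (hF : IsPartition F), P F hF from
    this (.ofSupportFinite f (finite f hf)) hf
  refine fun F => WellFoundedLT.induction F fun F ih hF => step F hF fun g hg hgF => ?_
  exact ih (.ofSupportFinite g (finite g hg)) hgF hg

theorem exists_conjFn_eq_succ (hf : IsPartition f) (h0 : f ≠ 0) : ∃ n, conjFn f 0 = n + 1 := by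
  refine Nat.exists_eq_succ_of_ne_zero fun h => h0 (funext fun r => ?_)
  exact hf.apply_eq_zero_iff.mpr (h.le.trans r.zero_le)

end IsPartition

end Partition

section Signature

/-- One step of the reduction of a signature that is read from bottom to top: `c` counts the `+`
signs met so far that no `−` sign above them has cancelled, and the current row carries a `+` sign
if `plus` holds and otherwise a `−` sign if `minus` holds. -/
def matchStep (plus minus : Prop) [Decidable plus] [Decidable minus] (c : ℕ) : ℕ :=
  if plus then c + 1 else if minus then c - 1 else c

theorem ncard_setOf_add_count (P : ℕ → Prop) [DecidablePred P] {a b : ℕ} (h : a ≤ b) :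
    {t | a ≤ t ∧ t < b ∧ P t}.ncard + Nat.count P a = Nat.count P b := by
  have : {t | a ≤ t ∧ t < b ∧ P t} = ↑((Finset.Ico a b).filter P) := by ext; simp [and_assoc]
  rw [this, Set.ncard_coe_finset, Nat.count_eq_card_filter_range, Nat.count_eq_card_filter_range,
    Finset.card_filter, Finset.card_filter, Finset.card_filter, add_comm,
    Finset.sum_range_add_sum_Ico _ h]

open Nat in
theorem le_iff_of_matchStep {A R : ℕ → Prop} [DecidablePred A] [DecidablePred R]
    (hAR : ∀ r, A r → ¬ R r) {c : ℕ → ℕ} (hc : ∀ r, c r = matchStep (A r) (R r) (c (r + 1)))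
    {N : ℕ} (hA : ∀ r, N ≤ r → ¬ A r) (hcN : ∀ r, N ≤ r → c r = 0) (r k : ℕ) :
    c r ≤ k ↔ ∀ s, r ≤ s → A s → count A (s + 1) + count R r ≤ count A r + count R s + k := by
  induction r using forall_of_forall_ge_of_succ N generalizing k with
  | hN r hr =>
    simp only [hcN r hr, zero_le, true_iff]
    exact fun s hs hAs => absurd hAs (hA s (hr.trans hs))
  | h r ih =>
    have split_first {Q : ℕ → Prop} : (∀ s, r ≤ s → Q s) ↔ Q r ∧ ∀ s, r + 1 ≤ s → Q s :=
      ⟨fun h => ⟨h r le_rfl, fun s hs => h s (by omega)⟩,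
        fun h s hs => hs.eq_or_lt.elim (fun e => e ▸ h.1) (h.2 s)⟩
    simp only [count_succ A r, count_succ R r] at ih
    rw [split_first, hc r, matchStep, count_succ]
    by_cases hA : A r
    · simp only [hA, hAR r hA, if_true, if_false] at ih ⊢
      cases k with
      | zero => simp
      | succ k =>
        rw [Nat.add_le_add_iff_right, ih]
        grind
    · by_cases hR : R r
      · simp only [hA, hR, if_true, if_false, false_imp_iff, true_and, Nat.sub_le_iff_le_add]
          at ih ⊢
        rw [ih]
        grind
      · simp only [hA, hR, if_false, false_imp_iff, true_and] at ih ⊢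
        exact ih k

/-- The beta-number (or charge-zero bead position) of row `r`, that is, the content of the first
node to the right of this row, minus one. -/
def betaNumber (f : ℕ → ℕ) (r : ℕ) : ℤ := f r - r - 1

variable {p : ℕ} {f : ℕ → ℕ} {i : ZMod p} {r : ℕ}

theorem betaNumber_of_apply_eq_zero (h : f r = 0) : betaNumber f r = -((r + 1 : ℕ) : ℤ) := by
  rw [betaNumber, h]
  push_cast
  ring

theorem betaNumber_succ_of_apply_eq (h : f (r + 1) = f r) :
    betaNumber f (r + 1) = betaNumber f r - 1 := by
  rw [betaNumber, betaNumber, h]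
  push_cast
  ring

theorem betaNumber_cast_eq_succ (h : f r + 1 = f (r + 1) + p) :
    (betaNumber f r : ZMod p) = betaNumber f (r + 1) := by
  have hcast := congrArg (Nat.cast : ℕ → ZMod p) h
  push_cast [ZMod.natCast_self] at hcast
  rw [betaNumber, betaNumber]
  push_cast
  linear_combination hcast

theorem addRes_iff :
    AddRes p f i r ↔ (betaNumber f r : ZMod p) = i - 1 ∧ (r = 0 ∨ f r < f (r - 1)) := by
  simp [AddRes, Addable, res, betaNumber, and_comm]

theorem remRes_iff : RemRes p f i r ↔ (betaNumber f r : ZMod p) = i ∧ f (r + 1) < f r := by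
  unfold RemRes Removable res betaNumber
  constructor
  · rintro ⟨c, ⟨hc, hlt⟩, rfl⟩
    refine ⟨?_, hlt⟩
    rw [← hc]
    push_cast
    ring
  · rintro ⟨rfl, hlt⟩
    obtain ⟨c, hc⟩ := Nat.exists_eq_succ_of_ne_zero hlt.ne_bot
    refine ⟨c, ⟨hc.symm, hlt⟩, ?_⟩
    rw [hc]
    push_cast
    ring

open Classical in
/-- The number of uncancelled `+` signs in rows `≥ r` of the `i`-signature of `f`. -/
noncomputable def unmatchedAddable (p : ℕ) (f : ℕ → ℕ) (i : ZMod p) (r : ℕ) : ℕ :=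
  scanUp (fun r => matchStep (AddRes p f i r) (RemRes p f i r)) (fun _ => 0) (conjFn f 0 + 1) r

open Classical in
/-- The analogue of `unmatchedAddable` in which every row with beta-number `i - 1` counts as `+`
and every row with beta-number `i` as `−`. Compared with the `i`-signature, any two equal rows
contribute an additional adjacent pair `−+`, which cancels. The empty rows have signs as well, and
`-r = i` describes where they leave a `+` uncancelled. -/
noncomputable def unmatched (p : ℕ) (f : ℕ → ℕ) (i : ZMod p) (r : ℕ) : ℕ :=
  scanUp (fun r => matchStep ((betaNumber f r : ZMod p) = i - 1) ((betaNumber f r : ZMod p) = i))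
    (fun r => if -(r : ZMod p) = i then 1 else 0) (conjFn f 0) r

namespace IsPartition

theorem unmatched_of_apply_eq_zero (hf : IsPartition f) (h : f r = 0) :
    unmatched p f i r = if -(r : ZMod p) = i then 1 else 0 :=
  scanUp_of_le (hf.apply_eq_zero_iff.mp h)

theorem not_addRes_of_lt (hf : IsPartition f) (h : conjFn f 0 < r) : ¬ AddRes p f i r := by
  rw [addRes_iff]
  rintro ⟨-, rfl | hlt⟩
  · exact h.not_ge (conjFn f 0).zero_le
  · rw [hf.apply_eq_zero_iff.mpr (Nat.le_sub_one_of_lt h)] at hlt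
    exact (f r).not_lt_zero hlt

theorem not_remRes_of_le (hf : IsPartition f) (h : conjFn f 0 ≤ r) : ¬ RemRes p f i r := by
  rw [remRes_iff, hf.apply_eq_zero_iff.mpr h]
  exact fun hr => (f (r + 1)).not_lt_zero hr.2

open Classical in
theorem unmatchedAddable_eq_matchStep (hf : IsPartition f) (i : ZMod p) (r : ℕ) :
    unmatchedAddable p f i r =
      matchStep (AddRes p f i r) (RemRes p f i r) (unmatchedAddable p f i (r + 1)) := by
  refine scanUp_eq_step (fun r hr => ?_) r
  rw [matchStep, if_neg (hf.not_addRes_of_lt hr), if_neg (hf.not_remRes_of_le (by omega))]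

variable [Nontrivial (ZMod p)]

open Classical in
theorem unmatched_eq_matchStep (hf : IsPartition f) (i : ZMod p) (r : ℕ) :
    unmatched p f i r = matchStep ((betaNumber f r : ZMod p) = i - 1)
      ((betaNumber f r : ZMod p) = i) (unmatched p f i (r + 1)) := by
  refine scanUp_eq_step (fun r hr => ?_) r
  rw [betaNumber_of_apply_eq_zero (hf.apply_eq_zero_iff.mpr hr), Int.cast_neg, Int.cast_natCast]
  have hi : i - 1 ≠ i := by simp
  have hplus : -((r + 1 : ℕ) : ZMod p) = i - 1 ↔ -(r : ZMod p) = i := by push_cast; grind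
  unfold matchStep
  grind

theorem normalRow_iff_unmatchedAddable (hf : IsPartition f) :
    NormalRow p f i r ↔ RemRes p f i r ∧ unmatchedAddable p f i (r + 1) = 0 := by
  classical
  have hAR (r : ℕ) (hA : AddRes p f i r) : ¬ RemRes p f i r := by
    rw [remRes_iff, (addRes_iff.mp hA).1]
    simp
  refine and_congr_right fun _ => ?_
  rw [← Nat.le_zero, le_iff_of_matchStep hAR (hf.unmatchedAddable_eq_matchStep i)
    (fun r => hf.not_addRes_of_lt) fun r hr => scanUp_of_le hr]
  refine forall₃_congr fun s hs _ => ?_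
  have hplus := ncard_setOf_add_count (AddRes p f i) (show r + 1 ≤ s + 1 by omega)
  have hminus := ncard_setOf_add_count (RemRes p f i) (show r + 1 ≤ s from hs)
  simp only [Order.add_one_le_iff, Order.lt_add_one_iff] at hplus hminus
  omega

open Classical in
theorem unmatched_eq_unmatchedAddable_add (hf : IsPartition f) (i : ZMod p) (r : ℕ) :
    unmatched p f i r = unmatchedAddable p f i r +
      if (betaNumber f r : ZMod p) = i - 1 ∧ ¬ (r = 0 ∨ f r < f (r - 1)) then 1 else 0 := by
  have hi : i - 1 ≠ i := by simp
  induction r using forall_of_forall_ge_of_succ (conjFn f 0 + 1) with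
  | hN r hr =>
    have hfr : f r = 0 := hf.apply_eq_zero_iff.mpr (by omega)
    have hfr' : f (r - 1) = 0 := hf.apply_eq_zero_iff.mpr (by omega)
    have hplus : -((r + 1 : ℕ) : ZMod p) = i - 1 ↔ -(r : ZMod p) = i := by push_cast; grind
    rw [hf.unmatched_of_apply_eq_zero hfr, betaNumber_of_apply_eq_zero hfr, Int.cast_neg,
      Int.cast_natCast, unmatchedAddable, scanUp_of_le hr, zero_add]
    simp only [hplus, hfr, hfr', show r ≠ 0 by omega, lt_irrefl, or_self, not_false_eq_true,
      and_true]
  | h r ih =>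
    have hmono := hf.succ_le r
    have hβ (h : f (r + 1) = f r) : (betaNumber f (r + 1) : ZMod p) = betaNumber f r - 1 := by
      simp [betaNumber_succ_of_apply_eq h]
    rw [hf.unmatched_eq_matchStep, ih, hf.unmatchedAddable_eq_matchStep i r]
    simp only [matchStep, addRes_iff, remRes_iff, Nat.add_sub_cancel]
    grind

theorem normalRow_iff (hf : IsPartition f) :
    NormalRow p f i r ↔ (betaNumber f r : ZMod p) = i ∧ unmatched p f i (r + 1) = 0 := by
  classical
  rw [hf.normalRow_iff_unmatchedAddable, hf.unmatched_eq_unmatchedAddable_add, remRes_iff]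
  have hmono := hf.succ_le r
  have hβ (h : f (r + 1) = f r) : (betaNumber f (r + 1) : ZMod p) = betaNumber f r - 1 := by
    simp [betaNumber_succ_of_apply_eq h]
  simp only [Nat.add_sub_cancel]
  grind

end IsPartition

end Signature

section RemNorm

variable {p : ℕ} {f : ℕ → ℕ} {i : ZMod p} {r : ℕ}

theorem remNorm_le (p : ℕ) (i : ZMod p) (f : ℕ → ℕ) : remNorm p i f ≤ f :=
  fun _ => Nat.sub_le _ _

theorem NormalRow.apply_succ_lt (h : NormalRow p f i r) : f (r + 1) < f r :=
  (remRes_iff.mp h.1).2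

theorem NormalRow.remNorm_add_one (h : NormalRow p f i r) : remNorm p i f r + 1 = f r := by
  have := h.apply_succ_lt
  rw [remNorm, if_pos h]
  omega

theorem remNorm_apply_of_not_normalRow (h : ¬ NormalRow p f i r) : remNorm p i f r = f r := by
  rw [remNorm, if_neg h, Nat.sub_zero]

theorem NormalRow.remNorm_lt (h : NormalRow p f i r) : remNorm p i f < f :=
  Pi.lt_def.mpr ⟨remNorm_le p i f, r, by have := h.remNorm_add_one; omega⟩

namespace IsPartition

open Classical in
theorem betaNumber_remNorm [Nontrivial (ZMod p)] (hf : IsPartition f) (i : ZMod p) (r : ℕ) :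
    (betaNumber (remNorm p i f) r : ZMod p) =
      if (betaNumber f r : ZMod p) = i ∧ unmatched p f i (r + 1) = 0 then
        (betaNumber f r : ZMod p) - 1 else betaNumber f r := by
  split_ifs with h <;> rw [← hf.normalRow_iff] at h
  · rw [betaNumber, betaNumber, ← h.remNorm_add_one]
    push_cast
    ring
  · rw [betaNumber, betaNumber, remNorm_apply_of_not_normalRow h]

protected theorem remNorm (hf : IsPartition f) (i : ZMod p) : IsPartition (remNorm p i f) := by
  refine isPartition_of_le hf (remNorm_le p i f) fun r => (remNorm_le p i f (r + 1)).trans ?_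
  by_cases h : NormalRow p f i r
  · exact Nat.le_of_lt_succ (h.apply_succ_lt.trans_eq h.remNorm_add_one.symm)
  · exact (hf.succ_le r).trans (remNorm_apply_of_not_normalRow h).ge

end IsPartition

protected theorem PRestricted.remNorm [Nontrivial (ZMod p)] (hfr : PRestricted p f)
    (hf : IsPartition f) (i : ZMod p) : PRestricted p (remNorm p i f) := by
  intro r
  have hr := hfr r
  have hle : remNorm p i f r ≤ f r := remNorm_le p i f r
  by_cases h' : NormalRow p f i (r + 1)
  · have := h'.remNorm_add_one
    by_cases h : NormalRow p f i r
    · have := h.remNorm_add_one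
      omega
    · rw [remNorm_apply_of_not_normalRow h]
      by_contra hlt
      -- Otherwise the beta-numbers of rows `r` and `r + 1` are congruent, and row `r` is normal.
      have hβ := betaNumber_cast_eq_succ (show f r + 1 = f (r + 1) + p by omega)
      rw [hf.normalRow_iff] at h h'
      refine h ⟨hβ.trans h'.1, ?_⟩
      rw [hf.unmatched_eq_matchStep, h'.1, h'.2]
      simp [matchStep, eq_comm (a := i)]
  · rw [remNorm_apply_of_not_normalRow h']
    omega

end RemNorm

section Peel

variable {p : ℕ} {f : ℕ → ℕ} {r : ℕ}

/-- The number of nodes that `peel p f` lacks in rows `≥ r`: reading the rows of `f` from bottom to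
top, a node is taken from row `r` unless `p` divides `f r + d`, where `d` nodes have been taken
before. -/
noncomputable def peeled (p : ℕ) (f : ℕ → ℕ) (r : ℕ) : ℕ :=
  scanUp (fun r d => if p ∣ f r + d then d else d + 1) (fun _ => 0) (conjFn f 0) r

/-- Row `r` of `f` keeps all its nodes in `peel p f`. -/
abbrev Kept (p : ℕ) (f : ℕ → ℕ) (r : ℕ) : Prop := p ∣ f r + peeled p f (r + 1)

/-- One step of Xu's algorithm, by which the Mullineux image is computed one row at a time: the
number of peeled nodes is the first part of the image. -/
noncomputable def peel (p : ℕ) (f : ℕ → ℕ) : ℕ → ℕ :=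
  fun r => f r - if Kept p f r then 0 else 1

/-- The position with which the beta-number of row `r - 1` is compared by `Kept`, see `kept_iff`. -/
noncomputable def front (p : ℕ) (f : ℕ → ℕ) (r : ℕ) : ℤ := -r - peeled p f r

theorem peel_le (p : ℕ) (f : ℕ → ℕ) : peel p f ≤ f :=
  fun _ => Nat.sub_le _ _

theorem kept_iff : Kept p f r ↔ (betaNumber f r : ZMod p) = front p f (r + 1) := by
  rw [Kept, ← ZMod.natCast_eq_zero_iff, ← sub_eq_zero (a := (betaNumber f r : ZMod p)),
    betaNumber, front]
  push_cast
  ring_nf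

theorem Kept.peel_eq (h : Kept p f r) : peel p f r = f r := by
  rw [peel, if_pos h, Nat.sub_zero]

namespace IsPartition

theorem peeled_of_apply_eq_zero (hf : IsPartition f) (h : f r = 0) : peeled p f r = 0 :=
  scanUp_of_le (hf.apply_eq_zero_iff.mp h)

theorem front_of_apply_eq_zero (hf : IsPartition f) (h : f r = 0) : front p f r = -r := by
  rw [front, hf.peeled_of_apply_eq_zero h, Nat.cast_zero, sub_zero]

theorem kept_of_apply_eq_zero (hf : IsPartition f) (h : f r = 0) : Kept p f r := by
  simp [Kept, h, hf.peeled_of_apply_eq_zero (hf.apply_eq_zero_of_le h r.le_succ)]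

theorem front_eq (hf : IsPartition f) (r : ℕ) :
    front p f r = if Kept p f r then front p f (r + 1) + 1 else front p f (r + 1) := by
  have hpeeled : peeled p f r =
      if Kept p f r then peeled p f (r + 1) else peeled p f (r + 1) + 1 :=
    scanUp_eq_step (fun s hs => by simp [hf.apply_eq_zero_iff.mpr hs]) r
  rw [front, front, hpeeled]
  split_ifs <;> push_cast <;> ring

theorem peel_add_one (hf : IsPartition f) (h : ¬ Kept p f r) : peel p f r + 1 = f r := by
  have : f r ≠ 0 := mt hf.kept_of_apply_eq_zero h
  rw [peel, if_neg h]
  omega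

theorem betaNumber_peel (hf : IsPartition f) (r : ℕ) :
    betaNumber (peel p f) r = if Kept p f r then betaNumber f r else betaNumber f r - 1 := by
  split_ifs with h
  · rw [betaNumber, betaNumber, h.peel_eq]
  · rw [betaNumber, betaNumber, ← hf.peel_add_one h]
    push_cast
    ring

protected theorem peel (hf : IsPartition f) (p : ℕ) : IsPartition (peel p f) := by
  refine isPartition_of_le hf (peel_le p f) fun r => ?_
  have hmono := hf.succ_le r
  by_cases h' : Kept p f (r + 1)
  · by_cases h : Kept p f r
    · rwa [h'.peel_eq, h.peel_eq]
    · rw [h'.peel_eq]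
      have := hf.peel_add_one h
      suffices f (r + 1) ≠ f r by omega
      -- If rows `r` and `r + 1` are equal and row `r + 1` is kept, then so is row `r`.
      intro heq
      refine h (kept_iff.mpr ?_)
      rw [hf.front_eq, if_pos h', Int.cast_add, ← kept_iff.mp h', betaNumber_succ_of_apply_eq heq]
      simp
  · have := hf.peel_add_one h'
    by_cases h : Kept p f r
    · rw [h.peel_eq]
      omega
    · have := hf.peel_add_one h
      omega

protected theorem peel_iterate (hf : IsPartition f) (p n : ℕ) : IsPartition ((peel p)^[n] f) :=
  Function.Iterate.rec IsPartition hf (fun _ hg => hg.peel p) n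

end IsPartition

protected theorem PRestricted.peel (hfr : PRestricted p f) (hf : IsPartition f) :
    PRestricted p (peel p f) := by
  intro r
  have hr := hfr r
  have hle : peel p f r ≤ f r := peel_le p f r
  by_cases h' : Kept p f (r + 1)
  · rw [h'.peel_eq]
    omega
  · have := hf.peel_add_one h'
    by_cases h : Kept p f r
    · rw [h.peel_eq]
      by_contra hlt
      have hβ := betaNumber_cast_eq_succ (show f r + 1 = f (r + 1) + p by omega)
      rw [kept_iff, hf.front_eq, if_neg h', hβ] at h
      exact h' (kept_iff.mpr h)
    · have := hf.peel_add_one h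
      omega

end Peel

section Commutation

/-- The relation, at each row, between the number `c` of uncancelled `+` signs of `f` for the
residue `i`, the fronts `y₁` of `remNorm p i f` and `y₂` of `f`, and the number `c'` of uncancelled
`+` signs of `peel p f` for the residue `i - 1`. -/
def Linked {R : Type*} [Ring R] (i : R) (c : ℕ) (y₁ y₂ : R) (c' : ℕ) : Prop :=
  (y₁ = y₂ ∧ y₁ ≠ i ∧ y₁ ≠ i - 1 ∧ c' = c) ∨ (y₁ = i - 1 ∧ y₂ = i - 1 ∧ c' = c + 1) ∨
    (y₁ = i ∧ y₂ = i ∧ c = c' + 1) ∨ (y₁ = i ∧ y₂ = i - 1 ∧ c = 0 ∧ c' = 0)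

section Ring

variable {R : Type*} [CommRing R] [Nontrivial R] [DecidableEq R] {i b b₁ b' y₁ y₂ : R} {c c' : ℕ}

theorem Linked.removed_eq (h : Linked i c y₁ y₂ c')
    (hb₁ : b₁ = if b = i ∧ c = 0 then b - 1 else b) (hb' : b' = if b = y₂ then b else b - 1) :
    ((if b = i ∧ c = 0 then 1 else 0) + if b₁ = y₁ then 0 else 1) =
      (if b = y₂ then 0 else 1) + if b' = i - 1 ∧ c' = 0 then 1 else 0 := by
  have hi : i - 1 ≠ i := by simp
  rcases h with h | h | h | h <;> grind

theorem Linked.step (h : Linked i c y₁ y₂ c')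
    (hb₁ : b₁ = if b = i ∧ c = 0 then b - 1 else b) (hb' : b' = if b = y₂ then b else b - 1) :
    Linked i (matchStep (b = i - 1) (b = i) c) (if b₁ = y₁ then y₁ + 1 else y₁)
      (if b = y₂ then y₂ + 1 else y₂) (matchStep (b' = i - 1 - 1) (b' = i - 1) c') := by
  have hi : i - 1 ≠ i := by simp
  obtain ⟨g, rfl⟩ : ∃ g, g - 1 = b' := ⟨b' + 1, add_sub_cancel_right b' 1⟩
  have hg : g = if b = y₂ then b + 1 else b := by grind
  unfold Linked matchStep at *
  simp only [sub_left_inj]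
  rcases h with h | h | h | h
  all_goals
    by_cases e1 : b = i
    · by_cases e2 : c = 0 <;> by_cases e3 : b = y₂ <;> grind
    · by_cases e2 : b = i - 1 <;> by_cases e3 : b = y₂ <;> grind

end Ring

variable {p : ℕ} {f : ℕ → ℕ}

namespace IsPartition

theorem front_cast_eq (hf : IsPartition f) (r : ℕ) :
    (front p f r : ZMod p) = if (betaNumber f r : ZMod p) = front p f (r + 1) then
      (front p f (r + 1) + 1 : ZMod p) else front p f (r + 1) := by
  rw [hf.front_eq]
  simp only [kept_iff]
  split_ifs <;> simp

theorem betaNumber_peel_cast (hf : IsPartition f) (r : ℕ) :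
    (betaNumber (peel p f) r : ZMod p) = if (betaNumber f r : ZMod p) = front p f (r + 1) then
      (betaNumber f r : ZMod p) else betaNumber f r - 1 := by
  rw [hf.betaNumber_peel]
  simp only [kept_iff]
  split_ifs <;> simp

variable [Nontrivial (ZMod p)]

theorem linked (hf : IsPartition f) (i : ZMod p) (r : ℕ) :
    Linked i (unmatched p f i r) (front p (remNorm p i f) r) (front p f r)
      (unmatched p (peel p f) (i - 1) r) := by
  induction r using forall_of_forall_ge_of_succ (conjFn f 0) with
  | hN r hr =>
    have hfr : f r = 0 := hf.apply_eq_zero_iff.mpr hr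
    have zero_of_le {g : ℕ → ℕ} (h : g ≤ f) : g r = 0 := Nat.le_zero.mp ((h r).trans hfr.le)
    have hi : i - 1 ≠ i := by simp
    rw [hf.unmatched_of_apply_eq_zero hfr, hf.front_of_apply_eq_zero hfr,
      (hf.remNorm i).front_of_apply_eq_zero (zero_of_le (remNorm_le p i f)),
      (hf.peel p).unmatched_of_apply_eq_zero (zero_of_le (peel_le p f))]
    push_cast
    unfold Linked
    grind
  | h r ih =>
    classical
    rw [hf.unmatched_eq_matchStep, (hf.peel p).unmatched_eq_matchStep, hf.front_cast_eq,
      (hf.remNorm i).front_cast_eq]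
    convert ih.step (hf.betaNumber_remNorm i r) (hf.betaNumber_peel_cast r)

theorem peel_remNorm (hf : IsPartition f) (i : ZMod p) :
    peel p (remNorm p i f) = remNorm p (i - 1) (peel p f) := by
  classical
  funext r
  have h := (hf.linked i (r + 1)).removed_eq (hf.betaNumber_remNorm i r) (hf.betaNumber_peel_cast r)
  simp only [← hf.normalRow_iff, ← (hf.peel p).normalRow_iff, ← kept_iff] at h
  simp only [peel, remNorm, Nat.sub_sub]
  convert congrArg (f r - ·) h

theorem peel_iterate_remNorm (hf : IsPartition f) (i : ZMod p) (n : ℕ) :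
    (peel p)^[n] (remNorm p i f) = remNorm p (i - n) ((peel p)^[n] f) := by
  induction n with
  | zero => simp
  | succ n ih =>
    rw [Function.iterate_succ_apply', ih, (hf.peel_iterate p n).peel_remNorm,
      Function.iterate_succ_apply', sub_sub, Nat.cast_succ]

end IsPartition

end Commutation

section PeelNumber

variable {p : ℕ} {f : ℕ → ℕ} {i : ZMod p}

/-- The number of times `peel p` has to be applied to reach the empty partition, i.e. the number of
parts that Xu's algorithm produces (`0` if the empty partition is never reached). -/
noncomputable def peelNumber (p : ℕ) (f : ℕ → ℕ) : ℕ :=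
  sInf {n | (peel p)^[n] f = 0}

theorem peelNumber_zero (p : ℕ) : peelNumber p 0 = 0 :=
  Nat.sInf_eq_zero.mpr (.inl rfl)

theorem apply_eq_one_of_remNorm_apply_eq_zero {r : ℕ} (h : remNorm p i f r = 0) (h0 : f r ≠ 0) :
    f r = 1 ∧ f (r + 1) = 0 ∧ i = -r := by
  have hnormal : NormalRow p f i r := by
    by_contra hn
    exact h0 (remNorm_apply_of_not_normalRow hn ▸ h)
  have hone : f r = 1 := by rw [← hnormal.remNorm_add_one, h]
  have hlt := hnormal.apply_succ_lt
  refine ⟨hone, by omega, ?_⟩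
  rw [← (remRes_iff.mp hnormal.1).1, betaNumber, hone]
  simp

namespace IsPartition

theorem conjFn_eq_or_of_remNorm (hf : IsPartition f) (i : ZMod p) :
    conjFn f 0 = conjFn (remNorm p i f) 0 ∨
      conjFn f 0 = conjFn (remNorm p i f) 0 + 1 ∧ i = -(conjFn (remNorm p i f) 0 : ℕ) := by
  set b := conjFn (remNorm p i f) 0
  have hle : b ≤ conjFn f 0 := (hf.remNorm i).apply_eq_zero_iff.mp
    (Nat.le_zero.mp ((remNorm_le p i f _).trans (hf.apply_eq_zero_iff.mpr le_rfl).le))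
  refine hle.eq_or_lt'.imp_right fun hlt => ?_
  have h0 : f b ≠ 0 := mt hf.apply_eq_zero_iff.mp (not_le.mpr hlt)
  obtain ⟨-, hsucc, hi⟩ :=
    apply_eq_one_of_remNorm_apply_eq_zero ((hf.remNorm i).apply_eq_zero_iff.mpr le_rfl) h0
  exact ⟨le_antisymm (hf.apply_eq_zero_iff.mp hsucc) hlt, hi⟩

end IsPartition

namespace PRestricted

theorem not_kept (hfr : PRestricted p f) (hf : IsPartition f) {r : ℕ} (hr : f (r + 1) = 0)
    (h0 : f r ≠ 0) : ¬ Kept p f r := by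
  have hlt := hfr r
  rw [Kept, hf.peeled_of_apply_eq_zero hr, add_zero]
  exact Nat.not_dvd_of_pos_of_lt (Nat.pos_of_ne_zero h0) (by omega)

theorem exists_not_kept (hfr : PRestricted p f) (hf : IsPartition f) (h0 : f ≠ 0) :
    ∃ r, ¬ Kept p f r := by
  obtain ⟨n, hn⟩ := hf.exists_conjFn_eq_succ h0
  exact ⟨n, hfr.not_kept hf (hf.apply_eq_zero_iff.mpr hn.le)
    (mt hf.apply_eq_zero_iff.mp (by omega))⟩

theorem peel_iterate (hfr : PRestricted p f) (hf : IsPartition f) (n : ℕ) :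
    PRestricted p ((peel p)^[n] f) :=
  (Function.Iterate.rec (fun g => IsPartition g ∧ PRestricted p g) ⟨hf, hfr⟩
    (fun _ hg => ⟨hg.1.peel p, hg.2.peel hg.1⟩) n).2

theorem exists_peel_iterate_eq_zero (hfr : PRestricted p f) (hf : IsPartition f) :
    ∃ n, (peel p)^[n] f = 0 := by
  induction f, hf using IsPartition.induction with
  | step f hf ih =>
    by_cases h0 : f = 0
    · exact ⟨0, h0⟩
    · obtain ⟨r, hr⟩ := hfr.exists_not_kept hf h0
      have hlt : peel p f < f :=
        Pi.lt_def.mpr ⟨peel_le p f, r, by have := hf.peel_add_one hr; omega⟩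
      obtain ⟨n, hn⟩ := ih (peel p f) (hf.peel p) hlt (hfr.peel hf)
      exact ⟨n + 1, hn⟩

theorem peel_iterate_eq_zero_iff (hfr : PRestricted p f) (hf : IsPartition f) {n : ℕ} :
    (peel p)^[n] f = 0 ↔ peelNumber p f ≤ n := by
  have hmin : (peel p)^[peelNumber p f] f = 0 := Nat.sInf_mem (hfr.exists_peel_iterate_eq_zero hf)
  have peel_zero : peel p 0 = 0 := nonpos_iff_eq_zero.mp (peel_le p 0)
  refine ⟨fun h => Nat.sInf_le h, fun h => ?_⟩
  rw [← Nat.sub_add_cancel h, Function.iterate_add_apply, hmin, Function.iterate_fixed peel_zero]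

theorem peel_eq_zero_of_remNorm_eq_zero (hfr : PRestricted p f) (hf : IsPartition f)
    (h : remNorm p i f = 0) (h0 : f ≠ 0) : i = 0 ∧ peel p f = 0 := by
  have hf0 : f 0 ≠ 0 := fun h => h0 (funext fun r => hf.apply_eq_zero_of_le h r.zero_le)
  obtain ⟨hone, hsucc, hi⟩ := apply_eq_one_of_remNorm_apply_eq_zero (congrFun h 0) hf0
  refine ⟨by simpa using hi, funext fun r => (hf.peel p).apply_eq_zero_of_le ?_ r.zero_le⟩
  have := hf.peel_add_one (hfr.not_kept hf hsucc hf0)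
  omega

theorem peelNumber_eq_or_of_remNorm [Nontrivial (ZMod p)] (hfr : PRestricted p f)
    (hf : IsPartition f) (i : ZMod p) :
    peelNumber p f = peelNumber p (remNorm p i f) ∨
      peelNumber p f = peelNumber p (remNorm p i f) + 1 ∧
        i = (peelNumber p (remNorm p i f) : ℕ) := by
  set n := peelNumber p (remNorm p i f)
  have iff_zero {m : ℕ} : remNorm p (i - m) ((peel p)^[m] f) = 0 ↔ n ≤ m := by
    rw [← hf.peel_iterate_remNorm, (hfr.remNorm hf i).peel_iterate_eq_zero_iff (hf.remNorm i)]
  have hle : n ≤ peelNumber p f := by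
    rw [← iff_zero, (hfr.peel_iterate_eq_zero_iff hf).mpr le_rfl]
    exact nonpos_iff_eq_zero.mp (remNorm_le _ _ 0)
  refine hle.eq_or_lt'.imp_right fun hlt => ?_
  have h0 : (peel p)^[n] f ≠ 0 := mt (hfr.peel_iterate_eq_zero_iff hf).mp (not_le.mpr hlt)
  obtain ⟨hi, hpeel⟩ := (hfr.peel_iterate hf n).peel_eq_zero_of_remNorm_eq_zero
    (hf.peel_iterate p n) (iff_zero.mpr le_rfl) h0
  rw [← Function.iterate_succ_apply' (peel p), hfr.peel_iterate_eq_zero_iff hf] at hpeel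
  exact ⟨le_antisymm hpeel hlt, sub_eq_zero.mp hi⟩

end PRestricted

end PeelNumber

section LastGap

/-- The relation between the fronts `x t` below and `y t` above a row and the beta-number `β t` of
the row, after `t` peelings and in coordinates moving with unit speed: where `β` meets `x` modulo
`p`, the row is kept and both `β` and `y` gain one. -/
structure RowStep (p : ℕ) (x β y : ℕ → ℤ) : Prop where
  front_eq (t : ℕ) : y t = if (β t : ZMod p) = x t then x t + 1 else x t
  beta_succ (t : ℕ) : β (t + 1) = if (β t : ZMod p) = x t then β t + 1 else β t

/-- From time `T` on, the increasing sequence `x` takes the values `m + 1, m + 2, …`, and `m` is the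
last value that it omits (or, if `T = 0`, the value just before all of its values). -/
structure IsLastGap (x : ℕ → ℤ) (T : ℕ) (m : ℤ) : Prop where
  strictMono : StrictMono x
  lt_of_lt (t : ℕ) : t < T → x t < m
  apply_add (t : ℕ) : x (T + t) = m + 1 + t

/-- Some value of `x` among the `p - 1` integers just before its last gap has residue `ζ`. In
particular, the last gap itself does not have residue `ζ`. -/
def LastGapAvoids (p : ℕ) (ζ : ZMod p) (x : ℕ → ℤ) : Prop :=
  ∃ T m τ, IsLastGap x T m ∧ (x τ : ZMod p) = ζ ∧ x τ < m ∧ m < x τ + p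

variable {p : ℕ} {x β y : ℕ → ℤ} {T d : ℕ} {m : ℤ} {ζ : ZMod p}

namespace RowStep

theorem apply_of_eq (h : RowStep p x β y) {t : ℕ} (ht : (β t : ZMod p) = x t) :
    y t = x t + 1 := by
  rw [h.front_eq, if_pos ht]

theorem apply_of_ne (h : RowStep p x β y) {t : ℕ} (ht : (β t : ZMod p) ≠ x t) : y t = x t := by
  rw [h.front_eq, if_neg ht]

theorem apply_mem_Icc (h : RowStep p x β y) (t : ℕ) : y t ∈ Set.Icc (x t) (x t + 1) := by
  rw [h.front_eq]
  split_ifs <;> simp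

theorem strictMono (h : RowStep p x β y) (hx : StrictMono x) : StrictMono y := by
  refine strictMono_nat_of_lt_succ fun t => ?_
  have hlt : x t < x (t + 1) := hx t.lt_succ_self
  have hsucc := (h.apply_mem_Icc (t + 1)).1
  by_cases ht : (β t : ZMod p) = x t
  · rw [h.apply_of_eq ht]
    rcases (Int.add_one_le_iff.mpr hlt).eq_or_lt with heq | hlt'
    · -- Once the row is met by a front of unit speed, it moves along with the front.
      have ht' : (β (t + 1) : ZMod p) = x (t + 1) := by
        rw [h.beta_succ, if_pos ht, ← heq, Int.cast_add, ht, Int.cast_add]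
      rw [h.apply_of_eq ht']
      omega
    · exact hlt'.trans_le hsucc
  · rw [h.apply_of_ne ht]
    exact hlt.trans_le hsucc

theorem beta_eq_iff (h : RowStep p x β y) (hx : ∀ t : ℕ, x (T + t) = m + 1 + t) (hd : d < p)
    (hβ : (β T : ZMod p) = (m + 1 + d : ℤ)) (t : ℕ) :
    (β (T + t) : ZMod p) = x (T + t) ↔ d ≤ t := by
  have iff_of_beta {t : ℕ} (hβt : (β (T + t) : ZMod p) = (m + 1 + max d t : ℤ)) :
      (β (T + t) : ZMod p) = x (T + t) ↔ d ≤ t := by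
    rw [hβt, hx, eq_comm, ZMod.intCast_eq_intCast_iff_dvd_sub, ← max_eq_right_iff (a := d)]
    refine ⟨fun hdvd => ?_, fun h => by simp [h]⟩
    have := Int.eq_zero_of_abs_lt_dvd hdvd (by rw [abs_lt]; omega)
    omega
  refine iff_of_beta ?_
  induction t with
  | zero => simpa using hβ
  | succ t ih =>
    rw [← add_assoc, h.beta_succ]
    by_cases hdt : d ≤ t
    · rw [if_pos ((iff_of_beta ih).mpr hdt), Int.cast_add, ih]
      push_cast [max_eq_right hdt, max_eq_right (hdt.trans t.le_succ)]
      ring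
    · rw [if_neg (mt (iff_of_beta ih).mp hdt), ih, max_eq_left (by omega), max_eq_left (by omega)]

theorem beta_eq_or (h : RowStep p x β y) {τ : ℕ} (hτ : τ < T) :
    (∃ s, τ ≤ s ∧ s < T ∧ (β T : ZMod p) = (x s + 1 : ℤ)) ∨
      β T = β τ ∧ (β τ : ZMod p) ≠ x τ := by
  induction T, hτ using Nat.le_induction with
  | base =>
    rw [h.beta_succ]
    by_cases hτ : (β τ : ZMod p) = x τ
    · exact .inl ⟨τ, le_rfl, τ.lt_succ_self, by simp [hτ]⟩
    · exact .inr ⟨if_neg hτ, hτ⟩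
  | succ T hT ih =>
    rw [h.beta_succ]
    by_cases hT' : (β T : ZMod p) = x T
    · exact .inl ⟨T, by omega, T.lt_succ_self, by simp [hT']⟩
    · rw [if_neg hT']
      exact ih.imp_left fun ⟨s, hs, hsT, hβ⟩ => ⟨s, hs, hsT.trans T.lt_succ_self, hβ⟩

end RowStep

theorem IsLastGap.apply_eq (hx : IsLastGap x T m) : x T = m + 1 := by
  simpa using hx.apply_add 0

theorem IsLastGap.step (hx : IsLastGap x T m) (h : RowStep p x β y) (hd : d < p)
    (hβ : (β T : ZMod p) = (m + 1 + d : ℤ)) : IsLastGap y (T + d) (m + 1 + d) where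
  strictMono := h.strictMono hx.strictMono
  lt_of_lt t ht := by
    rcases lt_or_ge t T with htT | htT
    · have := hx.lt_of_lt t htT
      have := (h.apply_mem_Icc t).2
      omega
    · obtain ⟨s, rfl⟩ := Nat.exists_eq_add_of_le htT
      rw [h.apply_of_ne (mt (h.beta_eq_iff hx.apply_add hd hβ s).mp (by omega)), hx.apply_add]
      omega
  apply_add t := by
    rw [add_assoc, h.apply_of_eq ((h.beta_eq_iff hx.apply_add hd hβ (d + t)).mpr (by omega)),
      hx.apply_add]
    push_cast
    ring

theorem LastGapAvoids.step [NeZero p] (hx : LastGapAvoids p ζ x) (h : RowStep p x β y) :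
    LastGapAvoids p ζ y := by
  obtain ⟨T, m, τ, hgap, hζ, hτm, hmτ⟩ := hx
  obtain ⟨d, hd, hβ⟩ : ∃ d < p, (β T : ZMod p) = (m + 1 + d : ℤ) :=
    ⟨(β T - (m + 1 : ℤ) : ZMod p).val, ZMod.val_lt _, by simp⟩
  refine ⟨T + d, m + 1 + d, ?_⟩
  rcases lt_or_ge (x τ + p) (m + 1 + d) with hlt | hle
  · obtain ⟨s, hs⟩ : ∃ s : ℕ, m + 1 + s = x τ + p := ⟨(x τ + p - (m + 1)).toNat, by omega⟩
    have hys : y (T + s) = x τ + p := by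
      rw [h.apply_of_ne (mt (h.beta_eq_iff hgap.apply_add hd hβ s).mp (by omega)),
        hgap.apply_add, hs]
    exact ⟨T + s, hgap.step h hd hβ, by simp [hys, hζ], by omega, by omega⟩
  · have hτT : τ < T := hgap.strictMono.lt_iff_lt.mp (by rw [hgap.apply_eq]; omega)
    obtain ⟨hβT, hne⟩ : β T = β τ ∧ (β τ : ZMod p) ≠ x τ := by
      refine (h.beta_eq_or hτT).resolve_left ?_
      rintro ⟨s, hτs, hsT, hβs⟩
      -- A row met at time `s ≥ τ` leads to a gap congruent to `x s + 1`, hence beyond `x τ + p`.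
      have hdvd : (p : ℤ) ∣ m + 1 + d - (x s + 1) :=
        (ZMod.intCast_eq_intCast_iff_dvd_sub _ _ _).mp (hβs.symm.trans hβ)
      have hxs := hgap.strictMono.monotone hτs
      have := hgap.lt_of_lt s hsT
      have := Int.le_of_dvd (by omega) hdvd
      omega
    have hm : m + 1 + d ≠ x τ + p := fun heq => hne (by rw [← hβT, hβ, heq]; simp)
    refine ⟨τ, hgap.step h hd hβ, ?_⟩
    rw [h.apply_of_ne hne]
    exact ⟨hζ, by omega, by omega⟩

end LastGap

section Noncongruence

variable {p : ℕ} {f : ℕ → ℕ}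

/-- The front of `f` at row `r` after `t` peelings, in coordinates moving with unit speed. -/
noncomputable def movingFront (p : ℕ) (f : ℕ → ℕ) (r t : ℕ) : ℤ :=
  front p ((peel p)^[t] f) r + t

/-- The beta-number of row `r` of `f` after `t` peelings, in coordinates moving with unit speed. -/
noncomputable def movingBeta (p : ℕ) (f : ℕ → ℕ) (r t : ℕ) : ℤ :=
  betaNumber ((peel p)^[t] f) r + t

namespace IsPartition

theorem rowStep (hf : IsPartition f) (p r : ℕ) :
    RowStep p (movingFront p f (r + 1)) (movingBeta p f r) (movingFront p f r) := by
  have kept_iff_moving (t : ℕ) : Kept p ((peel p)^[t] f) r ↔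
      (movingBeta p f r t : ZMod p) = movingFront p f (r + 1) t := by
    rw [kept_iff, movingBeta, movingFront, Int.cast_add, Int.cast_add, add_left_inj]
  constructor <;> intro t <;> have hft := hf.peel_iterate p t <;> simp only [← kept_iff_moving]
  · rw [movingFront, movingFront, hft.front_eq]
    split_ifs <;> ring
  · rw [movingBeta, movingBeta, Function.iterate_succ_apply', hft.betaNumber_peel]
    split_ifs <;> push_cast <;> ring

theorem movingFront_of_apply_eq_zero (hf : IsPartition f) {r : ℕ} (h : f r = 0) (t : ℕ) :
    movingFront p f r t = -r + t := by
  have hle : (peel p)^[t] f ≤ f :=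
    Function.Iterate.rec (· ≤ f) le_rfl (fun g hg => (peel_le p g).trans hg) t
  rw [movingFront, (hf.peel_iterate p t).front_of_apply_eq_zero
    (Nat.le_zero.mp ((hle r).trans h.le))]

end IsPartition

namespace PRestricted

theorem front_zero_eq_zero_iff (hfr : PRestricted p f) (hf : IsPartition f) :
    front p f 0 = 0 ↔ f = 0 := by
  refine ⟨fun h => ?_, fun h => hf.front_of_apply_eq_zero (congrFun h 0)⟩
  by_contra h0
  obtain ⟨r, hr⟩ := hfr.exists_not_kept hf h0
  have front_lt (s : ℕ) (hs : s ≤ r) : front p f s < -s := by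
    induction hs using Nat.decreasingInduction with
    | self =>
      rw [hf.front_eq, if_neg hr, front]
      omega
    | of_succ s _ ih =>
      rw [hf.front_eq]
      split_ifs <;> omega
  simpa [h] using front_lt 0 r.zero_le

theorem movingFront_zero_eq_iff (hfr : PRestricted p f) (hf : IsPartition f) {t : ℕ} :
    movingFront p f 0 t = t ↔ peelNumber p f ≤ t := by
  rw [movingFront, add_eq_right, (hfr.peel_iterate hf t).front_zero_eq_zero_iff
    (hf.peel_iterate p t), hfr.peel_iterate_eq_zero_iff hf]

theorem add_one_eq_peelNumber (hfr : PRestricted p f) (hf : IsPartition f) {T : ℕ} {m : ℤ}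
    (h : IsLastGap (movingFront p f 0) T m) (hT : T ≠ 0) : m + 1 = peelNumber p f := by
  set P := peelNumber p f
  have hm : m + 1 = T := by
    have := (hfr.movingFront_zero_eq_iff hf).mpr (show P ≤ T + P by omega)
    rw [h.apply_add] at this
    push_cast at this
    omega
  have hPT : P ≤ T := (hfr.movingFront_zero_eq_iff hf).mp (h.apply_eq.trans hm)
  have hTP : ¬ P ≤ T - 1 := fun hle => by
    have := (hfr.movingFront_zero_eq_iff hf).mpr hle
    have := h.lt_of_lt (T - 1) (by omega)
    omega
  omega

theorem lastGapAvoids_bottom (hfr : PRestricted p f) (hf : IsPartition f) {n j : ℕ}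
    (hn : f (n + 1) = 0) (hj : j < f n) :
    LastGapAvoids p (j - (n + 1)) (movingFront p f n) := by
  have hlt := hfr n
  have hx (t : ℕ) : movingFront p f (n + 1) t = -(n + 1 : ℕ) + t :=
    hf.movingFront_of_apply_eq_zero hn t
  have hgap : IsLastGap (movingFront p f (n + 1)) 0 (-(n + 2)) :=
    ⟨fun s t hst => by simpa [hx] using hst, fun t ht => absurd ht t.not_lt_zero,
      fun t => by rw [hx]; push_cast; omega⟩
  have hstep := hf.rowStep p n
  have hβ : (movingBeta p f n 0 : ZMod p) = ((-(n + 2) : ℤ) + 1 + f n : ℤ) := by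
    rw [movingBeta, betaNumber]
    push_cast [Function.iterate_zero_apply]
    ring
  have hj' : movingFront p f n j = j - (n + 1) := by
    have := hstep.beta_eq_iff hgap.apply_add (by omega) hβ j
    rw [zero_add] at this
    rw [hstep.apply_of_ne (mt this.mp (by omega)), hx]
    push_cast
    ring
  exact ⟨_, _, j, hgap.step hstep (by omega) hβ, by simp [hj'], by omega, by omega⟩

theorem conjFn_add_peelNumber_ne [NeZero p] (hfr : PRestricted p f) (hf : IsPartition f)
    {n j : ℕ} (hn : conjFn f 0 = n + 1) (hj : j < f n) :
    (conjFn f 0 + peelNumber p f : ZMod p) ≠ j + 1 := by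
  have avoids (r : ℕ) (hr : r ≤ n) : LastGapAvoids p (j - (n + 1)) (movingFront p f r) := by
    induction hr using Nat.decreasingInduction with
    | self => exact hfr.lastGapAvoids_bottom hf (hf.apply_eq_zero_iff.mpr hn.le) hj
    | of_succ r _ ih => exact ih.step (hf.rowStep p r)
  obtain ⟨T, m, τ, hgap, hζ, hτm, hmτ⟩ := avoids 0 n.zero_le
  have hT : T ≠ 0 := by
    rintro rfl
    have := hgap.apply_add τ
    rw [zero_add] at this
    omega
  have hm : (m : ZMod p) = peelNumber p f - 1 := by
    rw [eq_sub_iff_add_eq]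
    exact_mod_cast congrArg (Int.cast : ℤ → ZMod p) (hfr.add_one_eq_peelNumber hf hgap hT)
  intro heq
  have hdvd : (p : ℤ) ∣ m - movingFront p f 0 τ := by
    rw [← ZMod.intCast_eq_intCast_iff_dvd_sub, hζ, hm, sub_eq_sub_iff_add_eq_add, ← heq, hn]
    push_cast
    ring
  have := Int.le_of_dvd (by omega) hdvd
  omega

end PRestricted

end Noncongruence

section Mullineux

variable {p : ℕ} {f : ℕ → ℕ} {M : (ℕ → ℕ) → (ℕ → ℕ)}

theorem PRestricted.exists_remNorm_lt [Fact (1 < p)] (hfr : PRestricted p f) (hf : IsPartition f)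
    (h0 : f ≠ 0) : ∃ k : ZMod p, remNorm p k f < f ∧ k ≠ -(conjFn f 0 : ℕ) ∧
      k ≠ (peelNumber p f : ℕ) := by
  have : NeZero p := ⟨(zero_lt_one.trans (Fact.out : 1 < p)).ne'⟩
  obtain ⟨n, hn⟩ := hf.exists_conjFn_eq_succ h0
  have hsucc : f (n + 1) = 0 := hf.apply_eq_zero_iff.mpr hn.le
  have hpos : f n ≠ 0 := mt hf.apply_eq_zero_iff.mp (by omega)
  have hlt := hfr n
  have hbeta : (betaNumber f n : ZMod p) = f n - (n + 1) := by
    rw [betaNumber]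
    push_cast
    ring
  have hne : (betaNumber f n : ZMod p) ≠ -(n + 1 : ℕ) := fun heq => by
    rw [hbeta, Nat.cast_succ, sub_eq_neg_self, ZMod.natCast_eq_zero_iff] at heq
    exact hpos (Nat.eq_zero_of_dvd_of_lt heq (by omega))
  refine ⟨betaNumber f n, ?_, by rwa [hn], fun heq => ?_⟩
  · refine (hf.normalRow_iff.mpr ⟨rfl, ?_⟩).remNorm_lt
    rw [hf.unmatched_of_apply_eq_zero hsucc, if_neg hne.symm]
  · have hj : (f n - 1).succ = f n := by omega
    refine hfr.conjFn_add_peelNumber_ne hf hn (j := f n - 1) (by omega) ?_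
    rw [← Nat.cast_succ (f n - 1), hj, ← heq, hbeta, hn]
    push_cast
    ring

/-- The properties of the Mullineux map by which the lengths of its values are computed: Kleshchev's
intertwining relation for the removal of normal nodes, and the preservation of restricted and of
nonempty partitions. -/
structure IsMullineuxLike (p : ℕ) (M : (ℕ → ℕ) → (ℕ → ℕ)) : Prop where
  eq_zero_iff (f : ℕ → ℕ) : IsPartition f → PRestricted p f → (M f = 0 ↔ f = 0)
  isPartition_and_pRestricted (f : ℕ → ℕ) : IsPartition f → PRestricted p f →
    IsPartition (M f) ∧ PRestricted p (M f)
  map_remNorm (f : ℕ → ℕ) : IsPartition f → PRestricted p f → ∀ i : ZMod p,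
    M (remNorm p i f) = remNorm p (-i) (M f)

namespace IsMullineuxLike

theorem conjFn_eq_or (hM : IsMullineuxLike p M) (hfr : PRestricted p f) (hf : IsPartition f)
    (i : ZMod p) : conjFn (M f) 0 = conjFn (M (remNorm p i f)) 0 ∨
      conjFn (M f) 0 = conjFn (M (remNorm p i f)) 0 + 1 ∧
        i = (conjFn (M (remNorm p i f)) 0 : ℕ) := by
  have h := (hM.isPartition_and_pRestricted f hf hfr).1.conjFn_eq_or_of_remNorm (-i)
  rwa [← hM.map_remNorm f hf hfr, neg_inj] at h

theorem conjFn_eq_peelNumber [Fact (1 < p)] (hM : IsMullineuxLike p M) (hfr : PRestricted p f)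
    (hf : IsPartition f) : conjFn (M f) 0 = peelNumber p f := by
  induction f, hf using IsPartition.induction with
  | step f hf ih =>
    by_cases h0 : f = 0
    · rw [(hM.eq_zero_iff f hf hfr).mpr h0, h0, conjFn_zero, peelNumber_zero]
    have alternatives (i : ZMod p) (hlt : remNorm p i f < f) :
        ∃ b : ℕ, (conjFn (M f) 0 = b ∨ conjFn (M f) 0 = b + 1 ∧ i = b) ∧
          (peelNumber p f = b ∨ peelNumber p f = b + 1 ∧ i = b) := by
      have h := hM.conjFn_eq_or hfr hf i
      rw [ih _ (hf.remNorm i) hlt (hfr.remNorm hf i)] at h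
      exact ⟨_, h, hfr.peelNumber_eq_or_of_remNorm hf i⟩
    refine le_antisymm ?_ ?_
    · obtain ⟨k, hlt, -, hk⟩ := hfr.exists_remNorm_lt hf h0
      obtain ⟨b, hconj, hpeel⟩ := alternatives k hlt
      -- If the left side is `b + 1`, then `k = b`, and the right side is `b + 1` as it is not `k`.
      grind
    · obtain ⟨hMf, hMfr⟩ := hM.isPartition_and_pRestricted f hf hfr
      obtain ⟨k, hlt, hk, -⟩ := hMfr.exists_remNorm_lt hMf (mt (hM.eq_zero_iff f hf hfr).mp h0)
      have hne : remNorm p (-k) f ≠ f := fun heq => by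
        have h := hM.map_remNorm f hf hfr (-k)
        rw [heq, neg_neg] at h
        exact hlt.ne h.symm
      obtain ⟨b, hconj, hpeel⟩ := alternatives (-k) (lt_of_le_of_ne (remNorm_le p (-k) f) hne)
      grind

end IsMullineuxLike

end Mullineux

theorem stmt17_general (p : ℕ) (hp : 1 < p) (M : (ℕ → ℕ) → (ℕ → ℕ)) (hM : IsMullineuxLike p M)
    (f : ℕ → ℕ) (hf : IsPartition f) (hfr : PRestricted p f) :
    ¬ (conjFn f 0 + conjFn (M f) 0 ≡ 1 [MOD p]) := by
  have : Fact (1 < p) := ⟨hp⟩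
  have : NeZero p := ⟨(zero_lt_one.trans hp).ne'⟩
  rw [hM.conjFn_eq_peelNumber hfr hf, ← ZMod.natCast_eq_natCast_iff]
  by_cases h0 : f = 0
  · simp [h0, conjFn_zero, peelNumber_zero]
  · obtain ⟨n, hn⟩ := hf.exists_conjFn_eq_succ h0
    simpa using hfr.conjFn_add_peelNumber_ne hf hn (j := 0)
      (Nat.pos_of_ne_zero (mt hf.apply_eq_zero_iff.mp (by omega)))

/-- Let `p` be a prime and let `M` be the Mullineux map on `p`-restricted partitions,
characterised (uniquely) by: `M ∅ = ∅`, `M` preserves `p`-restricted partitions, `M`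
is an involution, and `M` intertwines the removal of normal nodes, with
`nor_i(λ) = nor_{−i}(M λ)` and `M(λ^{▾i}) = (M λ)^{▾(−i)}` (Kleshchev's description,
reflecting `e_i(D ⊗ sgn) ≅ (e_{−i} D) ⊗ sgn`). Then for every `p`-restricted
partition `λ`, the number of non-zero parts of `λ` plus the number of non-zero parts
of `M λ` is not congruent to `1` modulo `p`. -/
theorem stmt17 (p : ℕ) (hp : p.Prime) (M : (ℕ → ℕ) → (ℕ → ℕ))
    (hM0 : M (fun _ => 0) = (fun _ => 0))
    (hMres : ∀ f : ℕ → ℕ, IsPartition f → PRestricted p f →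
      IsPartition (M f) ∧ PRestricted p (M f))
    (hMinv : ∀ f : ℕ → ℕ, IsPartition f → PRestricted p f → M (M f) = f)
    (hMnor : ∀ f : ℕ → ℕ, IsPartition f → PRestricted p f → ∀ i : ZMod p,
      norCount p f i = norCount p (M f) (-i) ∧
        M (remNorm p i f) = remNorm p (-i) (M f))
    (f : ℕ → ℕ) (hf : IsPartition f) (hfr : PRestricted p f) :
    ¬ (conjFn f 0 + conjFn (M f) 0 ≡ 1 [MOD p]) := by
  exact stmt17_general p hp.one_lt M
    ⟨fun g hg hgr => ⟨fun h => (hMinv g hg hgr).symm.trans ((congrArg M h).trans hM0),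
      fun h => (congrArg M h).trans hM0⟩, hMres, fun g hg hgr i => (hMnor g hg hgr i).2⟩ f hf hfr
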